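/- In the symbolic message algebra, for every set S of messages, every message m, and every k : ℕ: if sig (atom k) m ∈ synth (analz S) and atom k ∉ analz S, then sig (atom k) m ∈ analz S. That is, an adversary who does not possess the signing key atom k cannot synthesize any new signature under that key; every signature under k in the adversary's constructible set was already extractable from S. -/

import Mathlib

/-- Symbolic message algebra (Dolev–Yao model). -/
inductive Msg where
  | atom : ℕ → Msg
  | pair : Msg → Msg → Msg
  | senc : Msg → Msg → Msg
  | aenc : ℕ → Msg → Msg
  | sig : Msg → Msg → Msg
deriving DecidableEq

/-- `Analz S m`: message `m` is extractable from the set `S` by projection,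
symmetric decryption with a known key, asymmetric decryption with a known
private key, or reading the message out of a signature. -/
inductive Analz (S : Set Msg) : Msg → Prop
  | mem {m : Msg} : m ∈ S → Analz S m
  | fst {a b : Msg} : Analz S (Msg.pair a b) → Analz S a
  | snd {a b : Msg} : Analz S (Msg.pair a b) → Analz S b
  | sdec {k m : Msg} : Analz S (Msg.senc k m) → Analz S k → Analz S m
  | adec {i : ℕ} {m : Msg} : Analz S (Msg.aenc i m) → Analz S (Msg.atom i) → Analz S m
  | sigMsg {k m : Msg} : Analz S (Msg.sig k m) → Analz S m

/-- `analz S` is the least superset of `S` closed under the analysis rules. -/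
def analz (S : Set Msg) : Set Msg := {m | Analz S m}

/-- `Synth S m`: message `m` is constructible from `S` by pairing, symmetric
encryption, signing, and asymmetric encryption under any public key. -/
inductive Synth (S : Set Msg) : Msg → Prop
  | mem {m : Msg} : m ∈ S → Synth S m
  | pair {a b : Msg} : Synth S a → Synth S b → Synth S (Msg.pair a b)
  | senc {k m : Msg} : Synth S k → Synth S m → Synth S (Msg.senc k m)
  | sig {k m : Msg} : Synth S k → Synth S m → Synth S (Msg.sig k m)
  | aenc (i : ℕ) {m : Msg} : Synth S m → Synth S (Msg.aenc i m)

/-- `synth S` is the least superset of `S` closed under the synthesis rules. -/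
def synth (S : Set Msg) : Set Msg := {m | Synth S m}

/-- Symbolic signature unforgeability (AV core): an adversary who cannot derive the
signing key `atom k` cannot synthesize any new signature under `k`; any such
signature in `synth (analz S)` was already extractable from `S`. -/
theorem sig_unforgeable (S : Set Msg) (m : Msg) (k : ℕ)
    (hsynth : Msg.sig (Msg.atom k) m ∈ synth (analz S))
    (hkey : Msg.atom k ∉ analz S) :
    Msg.sig (Msg.atom k) m ∈ analz S := by
  cases hsynth with
  | mem h => exact h
  | sig hk _ =>
    -- No synthesis rule builds an atom, so a synthesized key was already analyzable.
    cases hk with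
    | mem h => exact absurd h hkey
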